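/- arXiv:2403.12705 — 2 statements merged into one kernel-verified Lean document; each statement's English description precedes it below -/
import Mathlib

section
/- There exists a finite directed graph G with positive arc weights such that the union S of all minimum equivalent graphs of G satisfies both: (i) some arc of the directed ultrametric backbone of G is not an arc of S, and (ii) some arc of S is not an arc of the directed ultrametric backbone of G. -/
/-!
The example has three vertices and the arcs `0 → 1` of weight 3, `0 → 2` and `2 → 1` of weight 2,
`1 → 2` and `2 → 0` of weight 1 (only `1 → 0` is missing). It is strongly connected. A spanning
strongly connected subgraph must contain `1 → 2` (the only arc leaving `1`) and `2 → 0` (the only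
arc entering `0`), and moreover an arc leaving `0` and an arc entering `1`. The last two demands
are met by `0 → 1` alone, at cost 3, or by `0 → 2` and `2 → 1` together, at cost 4. Hence the
3-cycle `0 → 1 → 2 → 0`, of weight 5, is the only minimum equivalent graph. It contains `0 → 1`,
which the lighter path `0 → 2 → 1` expels from the backbone, and it omits `0 → 2`, which is in the
backbone because no arc leaving `0` has weight below 2.
-/

open SimpleGraph

/-- The directed ultrametric backbone of the directed graph `A` with arc weights `w`:
the arc `(i,j)` is retained iff there is no directed path from `i` to `j` all of whose
arcs have weight strictly less than `w i j`. -/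
def DirUltrametricBackbone {V : Type*} (A : V → V → Prop) (w : V → V → ℝ)
    (i j : V) : Prop :=
  A i j ∧ ¬ Relation.TransGen (fun a b => A a b ∧ w a b < w i j) i j

/-- The total arc weight of a directed graph `B` on a finite vertex type. -/
noncomputable def dirWeight {V : Type*} [Finite V] (w : V → V → ℝ)
    (B : V → V → Prop) : ℝ :=
  ∑ p ∈ {p : V × V | B p.1 p.2}.toFinite.toFinset, w p.1 p.2

/-- `B` is a minimum equivalent graph of `A`: a subgraph of `A` on the same vertex set
preserving reachability, of minimal total arc weight among all such subgraphs. -/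
def IsMEG {V : Type*} [Finite V] (A : V → V → Prop) (w : V → V → ℝ)
    (B : V → V → Prop) : Prop :=
  (∀ i j, B i j → A i j) ∧
  (∀ i j, Relation.ReflTransGen B i j ↔ Relation.ReflTransGen A i j) ∧
  ∀ B' : V → V → Prop, (∀ i j, B' i j → A i j) →
    (∀ i j, Relation.ReflTransGen B' i j ↔ Relation.ReflTransGen A i j) →
    dirWeight w B ≤ dirWeight w B'

namespace BackboneExample

/-- The arcs of the example: every ordered pair of distinct vertices except `(1, 0)`. -/
def arc (i j : Fin 3) : Prop := i ≠ j ∧ ¬ (i = 1 ∧ j = 0)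

/-- The arc weights of the example; the entries at non-arcs are irrelevant. -/
def wt : Fin 3 → Fin 3 → ℝ := ![![0, 3, 2], ![1, 0, 1], ![1, 2, 0]]

lemma wt_zero_one : wt 0 1 = 3 := rfl

lemma wt_zero_two : wt 0 2 = 2 := rfl

lemma wt_two_one : wt 2 1 = 2 := rfl

/-- The directed cycle `0 → 1 → 2 → 0`. -/
def cyc (i j : Fin 3) : Prop := j = i + 1

lemma cyc_arc {i j : Fin 3} (h : cyc i j) : arc i j := by
  revert h; unfold cyc arc; revert i j; decide

lemma cyc_reach (i j : Fin 3) : Relation.ReflTransGen cyc i j := by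
  have h1 : ∀ k, Relation.ReflTransGen cyc k (k + 1) := fun k => .single rfl
  have h2 : ∀ k, Relation.ReflTransGen cyc k (k + 1 + 1) := fun k => (h1 k).trans (h1 _)
  have h : j = i ∨ j = i + 1 ∨ j = i + 1 + 1 := by revert i j; decide
  rcases h with rfl | rfl | rfl
  · exact .refl
  · exact h1 i
  · exact h2 i

lemma arc_reach (i j : Fin 3) : Relation.ReflTransGen arc i j :=
  Relation.ReflTransGen.mono (fun _ _ => cyc_arc) _ _ (cyc_reach i j)

open Classical in
lemma dirWeight_eq {B : Fin 3 → Fin 3 → Prop} (hB : ∀ i j, B i j → arc i j) :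
    dirWeight wt B = (if B 0 1 then 3 else 0) + (if B 0 2 then 2 else 0) +
      (if B 1 2 then 1 else 0) + (if B 2 0 then 1 else 0) + (if B 2 1 then 2 else 0) := by
  have hl : ∀ i, ¬ B i i := fun i h => (hB i i h).1 rfl
  have h10 : ¬ B 1 0 := fun h => (hB 1 0 h).2 ⟨rfl, rfl⟩
  have hs : dirWeight wt B = ∑ p : Fin 3 × Fin 3, if B p.1 p.2 then wt p.1 p.2 else 0 := by
    rw [dirWeight, ← Finset.sum_filter]
    congr 1
    ext p
    simp
  rw [hs, Fintype.sum_prod_type]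
  simp [Fin.sum_univ_three, hl, h10, wt]
  ring

lemma dirWeight_cyc : dirWeight wt cyc = 5 := by
  rw [dirWeight_eq fun _ _ => cyc_arc]
  simp [cyc]
  norm_num

/-- The arcs forced in a subgraph that preserves reachability. -/
lemma forced {B : Fin 3 → Fin 3 → Prop} (hB : ∀ i j, B i j → arc i j)
    (hr : ∀ i j, Relation.ReflTransGen B i j ↔ Relation.ReflTransGen arc i j) :
    B 1 2 ∧ B 2 0 ∧ (B 0 1 ∨ B 0 2) ∧ (B 0 1 ∨ B 2 1) := by
  have hl : ∀ i, ¬ B i i := fun i h => (hB i i h).1 rfl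
  have h10 : ¬ B 1 0 := fun h => (hB 1 0 h).2 ⟨rfl, rfl⟩
  have reach : ∀ i j, Relation.ReflTransGen B i j := fun i j => (hr i j).2 (arc_reach i j)
  have out : ∀ i, ∃ k, B i k := fun i => by
    rcases (reach i (i + 1)).cases_head with h | ⟨k, hk, -⟩
    · exact absurd h (by revert i; decide)
    · exact ⟨k, hk⟩
  have inn : ∀ i, ∃ k, B k i := fun i => by
    rcases (reach (i + 1) i).cases_tail with h | ⟨k, -, hk⟩
    · exact absurd h (by revert i; decide)
    · exact ⟨k, hk⟩
  have o0 := out 0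
  have o1 := out 1
  have i0 := inn 0
  have i1 := inn 1
  simp [Fin.exists_fin_succ, hl, h10] at o0 o1 i0 i1
  exact ⟨o1, i0, o0, i1⟩

lemma isMEG_cyc : IsMEG arc wt cyc := by
  refine ⟨fun _ _ => cyc_arc, fun i j => iff_of_true (cyc_reach i j) (arc_reach i j), ?_⟩
  intro B hB hr
  obtain ⟨h12, h20, h0, h1⟩ := forced hB hr
  rw [dirWeight_cyc, dirWeight_eq hB]
  by_cases a : B 0 1 <;> by_cases b : B 0 2 <;> by_cases c : B 2 1 <;>
    simp_all <;> norm_num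

lemma not_meg_zero_two {B : Fin 3 → Fin 3 → Prop} (h : IsMEG arc wt B) : ¬ B 0 2 := by
  intro h02
  obtain ⟨h12, h20, -, h1⟩ := forced h.1 h.2.1
  have hle := h.2.2 cyc isMEG_cyc.1 isMEG_cyc.2.1
  rw [dirWeight_cyc, dirWeight_eq h.1] at hle
  by_cases a : B 0 1 <;> by_cases c : B 2 1 <;> simp_all <;> norm_num at hle

lemma backbone_zero_two : DirUltrametricBackbone arc wt 0 2 := by
  refine ⟨by unfold arc; decide, fun h => ?_⟩
  obtain ⟨k, ⟨hk, hw⟩, -⟩ := Relation.TransGen.head'_iff.1 h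
  fin_cases k
  · exact hk.1 rfl
  · have h3 : wt 0 1 < wt 0 2 := hw
    norm_num [wt_zero_one, wt_zero_two] at h3
  · exact lt_irrefl _ hw

lemma not_backbone_zero_one : ¬ DirUltrametricBackbone arc wt 0 1 := by
  intro h
  refine h.2 (.head (b := 2) ⟨by unfold arc; decide, ?_⟩ (.single ⟨by unfold arc; decide, ?_⟩)) <;>
    norm_num [wt_zero_one, wt_zero_two, wt_two_one]

end BackboneExample

open BackboneExample

/-- There exists a finite weighted directed graph `G` such that the union `S` of all
minimum equivalent graphs of `G` (i) lacks an arc of the directed ultrametric backbone,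
and (ii) has an arc that is not in the directed ultrametric backbone. -/
theorem exists_dir_backbone_ne_union_meg :
    ∃ (n : ℕ) (A : Fin n → Fin n → Prop) (w : Fin n → Fin n → ℝ),
      (∀ i, ¬ A i i) ∧ (∀ i j, A i j → 0 < w i j) ∧
      (∃ i j, DirUltrametricBackbone A w i j ∧
        ¬ ∃ B : Fin n → Fin n → Prop, IsMEG A w B ∧ B i j) ∧
      (∃ i j, (∃ B : Fin n → Fin n → Prop, IsMEG A w B ∧ B i j) ∧
        ¬ DirUltrametricBackbone A w i j) := by
  refine ⟨3, arc, wt, fun i h => h.1 rfl, fun i j h => ?_,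
    ⟨0, 2, backbone_zero_two, fun ⟨B, hB, h⟩ => not_meg_zero_two hB h⟩,
    ⟨0, 1, ⟨cyc, isMEG_cyc, rfl⟩, not_backbone_zero_one⟩⟩
  have hne := h.1
  fin_cases i <;> fin_cases j <;> simp_all [wt]
end

section
/- There exists a finite directed graph G with positive arc weights, all of whose vertices are reachable from every vertex, such that the union A of all minimum spanning arborescences of G (taken over all choices of root vertex) satisfies both: (i) some arc of the directed ultrametric backbone of G is not an arc of A, and (ii) some arc of A is not an arc of the directed ultrametric backbone of G. -/
/-!
The witness has three vertices and the arcs `0 → 1` (weight 5), `0 → 2` (3), `1 → 2` (1),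
`2 → 0` (1), `2 → 1` (4).

* The arc `0 → 2` is in the backbone, since the only other way out of `0` has weight 5. The
  optimal weights for the roots `0`, `1`, `2` are at most 6, 2, 5, because of `0 → 1 → 2`,
  `1 → 2 → 0` and the star at `2`. A spanning subgraph containing `0 → 2` costs at least 7, 5, 8
  respectively: besides `0 → 2`, it needs an arc into every vertex other than the root and an arc
  out of the root.
* The arc `0 → 1` lies in `0 → 1 → 2`, the optimal arborescence for the root `0`, but not in the
  backbone, since the path `0 → 2 → 1` has weights 3 and 4, both less than 5.
-/

open SimpleGraph

/-- `B` is a minimum spanning arborescence of `A` rooted at `r`: a subgraph of `A` in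
which every vertex other than `r` is reachable from `r` by a directed path, of minimal
total arc weight among all such subgraphs. -/
def IsMinSpanningArborescence {V : Type*} [Finite V] (A : V → V → Prop) (w : V → V → ℝ)
    (r : V) (B : V → V → Prop) : Prop :=
  (∀ i j, B i j → A i j) ∧
  (∀ v, v ≠ r → Relation.TransGen B r v) ∧
  ∀ B' : V → V → Prop, (∀ i j, B' i j → A i j) →
    (∀ v, v ≠ r → Relation.TransGen B' r v) →
    dirWeight w B ≤ dirWeight w B'

/-- The weights of the witness; the entry `0` marks an absent arc. -/
def exWeight : Fin 3 → Fin 3 → ℝ := ![![0, 5, 3], ![0, 0, 1], ![1, 4, 0]]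

/-- The arcs of the witness: the pairs of positive weight. -/
def exArc (i j : Fin 3) : Prop := 0 < exWeight i j

open Classical in
/-- Absent arcs have weight zero, so the weight of a relation is a sum over the five arcs. -/
lemma dirWeight_exWeight (B : Fin 3 → Fin 3 → Prop) :
    dirWeight exWeight B =
      (if B 0 1 then 5 else 0) + (if B 0 2 then 3 else 0) + (if B 1 2 then 1 else 0)
        + (if B 2 0 then 1 else 0) + (if B 2 1 then 4 else 0) := by
  have h : dirWeight exWeight B = ∑ i, ∑ j, if B i j then exWeight i j else 0 := by
    unfold dirWeight
    rw [← Fintype.sum_prod_type' (f := fun i j => if B i j then exWeight i j else 0),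
      ← Finset.sum_filter]
    apply Finset.sum_congr _ (fun _ _ => rfl)
    ext p
    simp
  rw [h]
  simp [Fin.sum_univ_three, exWeight]
  ring

lemma exists_arc_into {B : Fin 3 → Fin 3 → Prop} {r v : Fin 3}
    (h : Relation.TransGen B r v) : ∃ u, B u v := by
  cases h with
  | single h => exact ⟨_, h⟩
  | tail _ h => exact ⟨_, h⟩

lemma exists_arc_out {B : Fin 3 → Fin 3 → Prop} {r v : Fin 3}
    (h : Relation.TransGen B r v) : ∃ u, B r u := by
  obtain ⟨u, hu, _⟩ := Relation.TransGen.head'_iff.mp h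
  exact ⟨u, hu⟩

lemma into_zero {B : Fin 3 → Fin 3 → Prop} (hB : ∀ i j, B i j → exArc i j)
    (h : ∃ u, B u 0) : B 2 0 := by
  obtain ⟨u, hu⟩ := h
  have := hB _ _ hu
  fin_cases u <;> simp_all [exArc, exWeight]

lemma into_one {B : Fin 3 → Fin 3 → Prop} (hB : ∀ i j, B i j → exArc i j)
    (h : ∃ u, B u 1) : B 0 1 ∨ B 2 1 := by
  obtain ⟨u, hu⟩ := h
  have := hB _ _ hu
  fin_cases u <;> simp_all [exArc, exWeight]

lemma into_two {B : Fin 3 → Fin 3 → Prop} (hB : ∀ i j, B i j → exArc i j)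
    (h : ∃ u, B u 2) : B 0 2 ∨ B 1 2 := by
  obtain ⟨u, hu⟩ := h
  have := hB _ _ hu
  fin_cases u <;> simp_all [exArc, exWeight]

lemma out_zero {B : Fin 3 → Fin 3 → Prop} (hB : ∀ i j, B i j → exArc i j)
    (h : ∃ u, B 0 u) : B 0 1 ∨ B 0 2 := by
  obtain ⟨u, hu⟩ := h
  have := hB _ _ hu
  fin_cases u <;> simp_all [exArc, exWeight]

lemma out_one {B : Fin 3 → Fin 3 → Prop} (hB : ∀ i j, B i j → exArc i j)
    (h : ∃ u, B 1 u) : B 1 2 := by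
  obtain ⟨u, hu⟩ := h
  have := hB _ _ hu
  fin_cases u <;> simp_all [exArc, exWeight]

/-- The path `0 → 1 → 2`. -/
def exPath0 (i j : Fin 3) : Prop := (i = 0 ∧ j = 1) ∨ (i = 1 ∧ j = 2)

/-- The path `1 → 2 → 0`. -/
def exPath1 (i j : Fin 3) : Prop := (i = 1 ∧ j = 2) ∨ (i = 2 ∧ j = 0)

/-- The star `2 → 0`, `2 → 1`. -/
def exStar2 (i j : Fin 3) : Prop := (i = 2 ∧ j = 0) ∨ (i = 2 ∧ j = 1)

lemma dirWeight_exPath0 : dirWeight exWeight exPath0 = 6 := by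
  rw [dirWeight_exWeight]
  simp [exPath0]
  norm_num

lemma exPath0_le (i j : Fin 3) (h : exPath0 i j) : exArc i j := by
  rcases h with ⟨rfl, rfl⟩ | ⟨rfl, rfl⟩ <;> simp [exArc, exWeight]

lemma dirWeight_exPath1 : dirWeight exWeight exPath1 = 2 := by
  rw [dirWeight_exWeight]
  simp [exPath1]
  norm_num

lemma exPath1_le (i j : Fin 3) (h : exPath1 i j) : exArc i j := by
  rcases h with ⟨rfl, rfl⟩ | ⟨rfl, rfl⟩ <;> simp [exArc, exWeight]

lemma dirWeight_exStar2 : dirWeight exWeight exStar2 = 5 := by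
  rw [dirWeight_exWeight]
  simp [exStar2]
  norm_num

lemma exStar2_le (i j : Fin 3) (h : exStar2 i j) : exArc i j := by
  rcases h with ⟨rfl, rfl⟩ | ⟨rfl, rfl⟩ <;> simp [exArc, exWeight]

lemma exPath0_spans (v : Fin 3) (hv : v ≠ 0) : Relation.TransGen exPath0 0 v := by
  have h1 : Relation.TransGen exPath0 0 1 := .single (by simp [exPath0])
  have h2 : Relation.TransGen exPath0 0 2 := h1.tail (by simp [exPath0])
  fin_cases v
  exacts [absurd rfl hv, h1, h2]

lemma exPath1_spans (v : Fin 3) (hv : v ≠ 1) : Relation.TransGen exPath1 1 v := by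
  have h1 : Relation.TransGen exPath1 1 2 := .single (by simp [exPath1])
  have h2 : Relation.TransGen exPath1 1 0 := h1.tail (by simp [exPath1])
  fin_cases v
  exacts [h2, absurd rfl hv, h1]

lemma exStar2_spans (v : Fin 3) (hv : v ≠ 2) : Relation.TransGen exStar2 2 v := by
  fin_cases v
  exacts [.single (by simp [exStar2]), .single (by simp [exStar2]), absurd rfl hv]

lemma exArc_connected (i j : Fin 3) : Relation.ReflTransGen exArc i j := by
  have h01 : exArc 0 1 := by simp [exArc, exWeight]
  have h12 : exArc 1 2 := by simp [exArc, exWeight]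
  have h20 : exArc 2 0 := by simp [exArc, exWeight]
  -- Every vertex reaches `0` and is reached from `0` along the cycle `0 → 1 → 2 → 0`.
  have hi : Relation.ReflTransGen exArc i 0 := by
    fin_cases i
    exacts [.refl, .head h12 (.single h20), .single h20]
  have hj : Relation.ReflTransGen exArc 0 j := by
    fin_cases j
    exacts [.refl, .single h01, .head h01 (.single h12)]
  exact hi.trans hj

/-- The arc `0 → 2` is in the backbone: no arc lighter than 3 leaves `0`. -/
lemma backbone_zero_two : DirUltrametricBackbone exArc exWeight 0 2 := by
  refine ⟨by simp [exArc, exWeight], fun h => ?_⟩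
  obtain ⟨u, ⟨hu, hw⟩⟩ := exists_arc_out h
  fin_cases u <;> simp [exArc, exWeight] at hu hw
  linarith

lemma not_backbone_zero_one : ¬ DirUltrametricBackbone exArc exWeight 0 1 := by
  rintro ⟨-, h⟩
  refine h (.head (b := 2) ?_ (.single ?_)) <;> simp [exArc, exWeight] <;> norm_num

lemma not_minSpanning_of_zero_two (r : Fin 3) (B : Fin 3 → Fin 3 → Prop)
    (h : IsMinSpanningArborescence exArc exWeight r B) : ¬ B 0 2 := by
  intro h02
  obtain ⟨hB, hs, hmin⟩ := h
  fin_cases r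
  · have h1 := into_one hB (exists_arc_into (hs 1 (by decide)))
    have hle := hmin exPath0 exPath0_le exPath0_spans
    rw [dirWeight_exWeight, dirWeight_exPath0] at hle
    simp only [h02, if_true] at hle
    split_ifs at hle <;> first | tauto | linarith
  · have h0 := into_zero hB (exists_arc_into (hs 0 (by decide)))
    have h1 := out_one hB (exists_arc_out (hs 0 (by decide)))
    have hle := hmin exPath1 exPath1_le exPath1_spans
    rw [dirWeight_exWeight, dirWeight_exPath1] at hle
    simp only [h02, h0, h1, if_true] at hle
    split_ifs at hle <;> linarith
  · have h0 := into_zero hB (exists_arc_into (hs 0 (by decide)))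
    have h1 := into_one hB (exists_arc_into (hs 1 (by decide)))
    have hle := hmin exStar2 exStar2_le exStar2_spans
    rw [dirWeight_exWeight, dirWeight_exStar2] at hle
    simp only [h02, h0, if_true] at hle
    split_ifs at hle <;> first | tauto | linarith

lemma exPath0_minSpanning : IsMinSpanningArborescence exArc exWeight 0 exPath0 := by
  refine ⟨exPath0_le, exPath0_spans, fun B hB hs => ?_⟩
  have h1 := into_one hB (exists_arc_into (hs 1 (by decide)))
  have h2 := into_two hB (exists_arc_into (hs 2 (by decide)))
  have h0 := out_zero hB (exists_arc_out (hs 1 (by decide)))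
  rw [dirWeight_exPath0, dirWeight_exWeight]
  split_ifs <;> first | tauto | norm_num

/-- There exists a finite weighted directed graph `G`, all of whose vertices are
reachable from every vertex, such that the union `A` of all minimum spanning
arborescences of `G` (over all roots) (i) lacks an arc of the directed ultrametric
backbone, and (ii) has an arc that is not in the directed ultrametric backbone. -/
theorem exists_dir_backbone_ne_union_arborescences :
    ∃ (n : ℕ) (A : Fin n → Fin n → Prop) (w : Fin n → Fin n → ℝ),
      (∀ i, ¬ A i i) ∧ (∀ i j, A i j → 0 < w i j) ∧
      (∀ i j : Fin n, Relation.ReflTransGen A i j) ∧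
      (∃ i j, DirUltrametricBackbone A w i j ∧
        ¬ ∃ (r : Fin n) (B : Fin n → Fin n → Prop),
          IsMinSpanningArborescence A w r B ∧ B i j) ∧
      (∃ i j, (∃ (r : Fin n) (B : Fin n → Fin n → Prop),
          IsMinSpanningArborescence A w r B ∧ B i j) ∧
        ¬ DirUltrametricBackbone A w i j) := by
  exact ⟨3, exArc, exWeight, by intro i; fin_cases i <;> simp [exArc, exWeight],
    fun _ _ h => h, exArc_connected,
    ⟨0, 2, backbone_zero_two, fun ⟨r, B, h, h02⟩ => not_minSpanning_of_zero_two r B h h02⟩,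
    ⟨0, 1, ⟨0, exPath0, exPath0_minSpanning, .inl ⟨rfl, rfl⟩⟩, not_backbone_zero_one⟩⟩
end
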